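/- Let H be a 2-vertex-connected undirected graph with a DFS tree T rooted at r, with vertices identified with their DFS numbers. (i) Let {v,(u,p(u))} be a vertex-edge cut-pair of H such that v is a proper ancestor of u, u ≠ r, and high(u) = v, and let c be the child of v that is an ancestor of u. Then either low(u) = v, or low(u) is a proper ancestor of v and u ≤ M_p(c). (ii) Conversely, if c is a proper ancestor of u with c ≠ r and high(u) = p(c), and either low(u) = p(c), or low(u) is a proper ancestor of p(c) and u ≤ M_p(c), then {p(c),(u,p(u))} is a vertex-edge cut-pair of H. -/

import Mathlib

/-- A DFS tree of the graph `H`, rooted at `r`, given by a parent function: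
it is a spanning tree (every vertex reaches the root by iterating the parent
function, and each non-root vertex is adjacent to its parent), and every edge
of `H` joins a vertex to one of its ancestors. -/
structure DFSTree {V : Type*} (H : SimpleGraph V) (r : V) where
  par : V → V
  par_root : par r = r
  reaches_root : ∀ v : V, ∃ n : ℕ, par^[n] v = r
  par_adj : ∀ v : V, v ≠ r → H.Adj v (par v)
  edge_anc : ∀ x y : V, H.Adj x y → (∃ n : ℕ, par^[n] x = y) ∨ (∃ n : ℕ, par^[n] y = x)

namespace DFSTree

variable {V : Type*} {H : SimpleGraph V} {r : V} (T : DFSTree H r)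

/-- `a` is an ancestor of `b` (every vertex is an ancestor of itself). -/
def Anc (a b : V) : Prop := ∃ n : ℕ, T.par^[n] b = a

/-- `a` is a proper ancestor of `b`. -/
def PAnc (a b : V) : Prop := T.Anc a b ∧ a ≠ b

/-- `(x,y)` is a back-edge: an edge of `H` from `x` to an ancestor `y` of `x`
which is not the tree edge from `x` to its parent. -/
def BackEdge (x y : V) : Prop := H.Adj x y ∧ T.Anc y x ∧ T.par x ≠ y

/-- The set of descendants of `v` joined by a back-edge to a proper ancestor of `v`. -/
def MSet (v : V) : Set V := {x | T.Anc v x ∧ ∃ y, T.PAnc y v ∧ T.BackEdge x y}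

/-- `m = M(v)`: `m` is the nearest common ancestor of all descendants of `v`
joined by a back-edge to a proper ancestor of `v`. -/
def IsM (v m : V) : Prop :=
  (∀ x ∈ T.MSet v, T.Anc m x) ∧ ∀ m' : V, (∀ x ∈ T.MSet v, T.Anc m' x) → T.Anc m' m

/-- The set of descendants of `v` joined by a back-edge to a proper ancestor of `p(v)`. -/
def MpSet (v : V) : Set V := {x | T.Anc v x ∧ ∃ y, T.PAnc y (T.par v) ∧ T.BackEdge x y}

/-- `m = M_p(v)`: `m` is the nearest common ancestor of all descendants of `v`
joined by a back-edge to a proper ancestor of `p(v)`. -/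
def IsMp (v m : V) : Prop :=
  (∀ x ∈ T.MpSet v, T.Anc m x) ∧ ∀ m' : V, (∀ x ∈ T.MpSet v, T.Anc m' x) → T.Anc m' m

/-- `h = high(v)`: `h` is the deepest proper ancestor of `v` joined by a
back-edge to a descendant of `v`. -/
def IsHigh (v h : V) : Prop :=
  T.PAnc h v ∧ (∃ x, T.Anc v x ∧ T.BackEdge x h) ∧
    ∀ h' : V, T.PAnc h' v → (∃ x, T.Anc v x ∧ T.BackEdge x h') → T.Anc h' h

/-- `h = high_p(v)`: `h` is the deepest proper ancestor of `p(v)` joined by a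
back-edge to a descendant of `v`. -/
def IsHighP (v h : V) : Prop :=
  T.PAnc h (T.par v) ∧ (∃ x, T.Anc v x ∧ T.BackEdge x h) ∧
    ∀ h' : V, T.PAnc h' (T.par v) → (∃ x, T.Anc v x ∧ T.BackEdge x h') → T.Anc h' h

/-- `l = low(v)`: `l` is the proper ancestor of `v` nearest to the root joined
by a back-edge to a descendant of `v`. -/
def IsLow (v l : V) : Prop :=
  T.PAnc l v ∧ (∃ x, T.Anc v x ∧ T.BackEdge x l) ∧
    ∀ l' : V, T.PAnc l' v → (∃ x, T.Anc v x ∧ T.BackEdge x l') → T.Anc l l'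

end DFSTree

/-- `{v, e}` is a vertex-edge cut-pair of `H`: `e` is an edge of `H` and deleting
both `v` (with its incident edges) and `e` disconnects `H`. -/
def VECutPair {V : Type*} (H : SimpleGraph V) (v : V) (e : Sym2 V) : Prop :=
  e ∈ H.edgeSet ∧ ¬ ((H.deleteEdges {e}).induce {u | u ≠ v}).Connected

/-- `{e, e'}` is a cut-pair of `H`: `e` and `e'` are distinct edges of `H` whose
deletion disconnects `H`. -/
def ECutPair {V : Type*} (H : SimpleGraph V) (e e' : Sym2 V) : Prop :=
  e ∈ H.edgeSet ∧ e' ∈ H.edgeSet ∧ e ≠ e' ∧ ¬ (H.deleteEdges {e, e'}).Connected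

/-- An undirected graph is 2-edge-connected if it is connected and has no bridge. -/
def TwoEdgeConnected {W : Type*} (G : SimpleGraph W) : Prop :=
  G.Connected ∧ ∀ e ∈ G.edgeSet, ¬ G.IsBridge e

/-- An undirected graph is 2-vertex-connected if it has at least three vertices,
is connected, and deleting any single vertex leaves it connected. -/
def TwoVertexConnected {W : Type*} (G : SimpleGraph W) : Prop :=
  3 ≤ Nat.card W ∧ G.Connected ∧ ∀ v : W, (G.induce {u | u ≠ v}).Connected

/-!
Write `v = p(c)` and `e = (u, p(u))`, where `high(u) = v`.

If `low(u)` lies above `v` and some `y` below `c` but not below `u` also has a back-edge to a proper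
ancestor of `v`, then `u` and `p(u)` are joined in `H - v - e`: go from `u` down to the lower end of
a back-edge to `low(u)`, up to the root, down to `y` through its back-edge, up the tree to `c`, and
down the tree to `p(u)`. As `H - v` is connected, so is then `H - v - e`. Hence every such `y` is
below `u`, which means that `u` is an ancestor of `M_p(c)`. Since `u` and `M_p(c)` have a common
descendant and subtrees are numbered consecutively, this amounts to `u ≤ M_p(c)`.

Conversely, if `low(u) = v`, then `v` and `e` cut off the subtree of `u`; and if `u` is an ancestor
of `M_p(c)`, they cut off the subtree of `c` minus that of `u`.
-/

section ComponentUnion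

variable {V : Type*} {H : SimpleGraph V} {v : V} {e : Sym2 V} {A : Set V}

theorem preconnected_induce_iff_exists_adj {s : Set V} :
    (H.induce s).Preconnected ↔
      ∀ A : Set V, (s ∩ A).Nonempty → (s \ A).Nonempty → ∃ a ∈ s ∩ A, ∃ b ∈ s \ A, H.Adj a b := by
  constructor
  · rintro hconn A ⟨a, has, haA⟩ ⟨b, hbs, hbA⟩
    obtain ⟨walk⟩ := hconn ⟨a, has⟩ ⟨b, hbs⟩
    obtain ⟨d, -, hfst, hsnd⟩ := walk.exists_boundary_dart (Subtype.val ⁻¹' A) haA hbA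
    exact ⟨d.fst, ⟨d.fst.2, hfst⟩, d.snd, ⟨d.snd.2, hsnd⟩, d.adj⟩
  · intro hcross a b
    by_contra hab
    obtain ⟨_, ⟨-, x, hax, rfl⟩, y, ⟨hys, hay⟩, hxy⟩ :=
      hcross (Subtype.val '' {x | (H.induce s).Reachable a x})
        ⟨a, a.2, a, .rfl, rfl⟩ ⟨b, b.2, by simpa using hab⟩
    have hstep : (H.induce s).Adj x ⟨y, hys⟩ := hxy
    exact hay ⟨⟨y, hys⟩, hax.trans hstep.reachable, rfl⟩

/-- `A` is a union of connected components of `H - v - e`; such a set that neither contains nor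
misses all vertices other than `v` witnesses that `{v, e}` is a cut-pair. Whether `v` itself belongs
to `A` is left open. -/
def IsComponentUnion (H : SimpleGraph V) (v : V) (e : Sym2 V) (A : Set V) : Prop :=
  ∀ ⦃a b : V⦄, a ≠ v → b ≠ v → H.Adj a b → s(a, b) ≠ e → a ∈ A → b ∈ A

theorem IsComponentUnion.mem_iff_mem (hA : IsComponentUnion H v e A) {a b : V} (hav : a ≠ v)
    (hbv : b ≠ v) (hab : H.Adj a b) (he : s(a, b) ≠ e) : a ∈ A ↔ b ∈ A :=
  ⟨hA hav hbv hab he, hA hbv hav hab.symm (Sym2.eq_swap ▸ he)⟩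

theorem vECutPair_iff_exists_isComponentUnion :
    VECutPair H v e ↔ e ∈ H.edgeSet ∧
      ∃ A, IsComponentUnion H v e A ∧ (∃ a ∈ A, a ≠ v) ∧ ∃ b ∉ A, b ≠ v := by
  refine and_congr_right fun he => ?_
  have hne : Nonempty {w | w ≠ v} := by
    induction e with | _ p q =>
    by_cases hp : p = v
    · exact ⟨q, fun hq => H.ne_of_adj he (hp.trans hq.symm)⟩
    · exact ⟨p, hp⟩
  rw [SimpleGraph.connected_iff, and_iff_left hne, preconnected_induce_iff_exists_adj]
  push Not
  refine exists_congr fun A => ⟨?_, ?_⟩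
  · rintro ⟨⟨a, hav, haA⟩, ⟨b, hbv, hbA⟩, hclosed⟩
    refine ⟨fun x y hxv hyv hxy hxye hxA => ?_, ⟨a, haA, hav⟩, b, hbA, hbv⟩
    by_contra hyA
    exact hclosed x ⟨hxv, hxA⟩ y ⟨hyv, hyA⟩ (H.deleteEdges_adj.2 ⟨hxy, hxye⟩)
  · rintro ⟨hA, ⟨a, haA, hav⟩, b, hbA, hbv⟩
    refine ⟨⟨a, hav, haA⟩, ⟨b, hbv, hbA⟩, fun x hx y hy hxy => ?_⟩
    have ⟨hadj, hxye⟩ := H.deleteEdges_adj.1 hxy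
    exact hy.2 (hA hx.1 hy.1 hadj hxye hx.2)

theorem VECutPair.exists_isComponentUnion_separating {p q : V} (hcut : VECutPair H v s(p, q))
    (hconn : (H.induce {w | w ≠ v}).Preconnected) :
    p ≠ v ∧ q ≠ v ∧ ∃ A, IsComponentUnion H v s(p, q) A ∧ ¬(p ∈ A ↔ q ∈ A) := by
  obtain ⟨-, A, hA, ⟨s, hsA, hsv⟩, t, htA, htv⟩ := vECutPair_iff_exists_isComponentUnion.1 hcut
  obtain ⟨a, ⟨hav, haA⟩, b, ⟨hbv, hbA⟩, hab⟩ :=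
    preconnected_induce_iff_exists_adj.1 hconn A ⟨s, hsv, hsA⟩ ⟨t, htv, htA⟩
  have he : s(a, b) = s(p, q) := by
    by_contra he
    exact hbA (hA hav hbv hab he haA)
  rcases Sym2.eq_iff.1 he with ⟨rfl, rfl⟩ | ⟨rfl, rfl⟩
  · exact ⟨hav, hbv, A, hA, fun h => hbA (h.1 haA)⟩
  · exact ⟨hbv, hav, A, hA, fun h => hbA (h.2 haA)⟩

end ComponentUnion

namespace DFSTree

variable {V : Type*} {H : SimpleGraph V} {r : V} {T : DFSTree H r} {a b c u v w x y : V}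

theorem Anc.refl (a : V) : T.Anc a a := ⟨0, rfl⟩

theorem Anc.trans (hab : T.Anc a b) (hbc : T.Anc b c) : T.Anc a c := by
  obtain ⟨m, rfl⟩ := hab
  obtain ⟨n, rfl⟩ := hbc
  exact ⟨m + n, Function.iterate_add_apply _ _ _ _⟩

theorem par_anc (a : V) : T.Anc (T.par a) a := ⟨1, rfl⟩

theorem root_anc (a : V) : T.Anc r a := T.reaches_root a

theorem Anc.eq_root (h : T.Anc a r) : a = r := by
  obtain ⟨n, rfl⟩ := h
  exact Function.iterate_fixed T.par_root n

theorem eq_root_of_isPeriodicPt {n : ℕ} (hn : 0 < n) (ha : T.par.IsPeriodicPt n a) : a = r := by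
  obtain ⟨k, hk⟩ := T.reaches_root a
  calc
    a = T.par^[n * k - k + k] a := by
      rw [Nat.sub_add_cancel (Nat.le_mul_of_pos_left k hn)]
      exact (ha.mul_const k).symm
    _ = r := by rw [Function.iterate_add_apply, hk, Function.iterate_fixed T.par_root]

theorem Anc.antisymm (hab : T.Anc a b) (hba : T.Anc b a) : a = b := by
  obtain ⟨m, rfl⟩ := hab
  obtain ⟨n, hn⟩ := hba
  obtain rfl | hm := m.eq_zero_or_pos
  · rfl
  have hb : b = r := by
    refine eq_root_of_isPeriodicPt (T := T) (n := n + m) (by lia) ?_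
    rwa [Function.IsPeriodicPt, Function.IsFixedPt, Function.iterate_add_apply]
  rw [hb, Function.iterate_fixed T.par_root]

theorem par_ne_self (ha : a ≠ r) : T.par a ≠ a := (T.par_adj a ha).ne'

theorem not_anc_par (ha : a ≠ r) : ¬T.Anc a (T.par a) := fun h =>
  par_ne_self ha ((par_anc a).antisymm h)

theorem PAnc.not_anc (hab : T.PAnc a b) : ¬T.Anc b a := fun hba => hab.2 (hab.1.antisymm hba)

theorem PAnc.ne_root (hab : T.PAnc a b) : b ≠ r := by
  rintro rfl
  exact hab.2 hab.1.eq_root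

theorem PAnc.anc_par (hab : T.PAnc a b) : T.Anc a (T.par b) := by
  obtain ⟨⟨_ | n, hn⟩, hne⟩ := hab
  · exact absurd hn.symm hne
  · exact ⟨n, hn⟩

theorem Anc.anc_or_anc (hax : T.Anc a x) (hbx : T.Anc b x) : T.Anc a b ∨ T.Anc b a := by
  obtain ⟨m, rfl⟩ := hax
  obtain ⟨n, rfl⟩ := hbx
  rcases le_total m n with hmn | hnm
  · exact .inr ⟨n - m, by rw [← Function.iterate_add_apply, Nat.sub_add_cancel hmn]⟩
  · exact .inl ⟨m - n, by rw [← Function.iterate_add_apply, Nat.sub_add_cancel hnm]⟩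

theorem BackEdge.ne_treeEdge (hxy : T.BackEdge x y) (u : V) : s(x, y) ≠ s(u, T.par u) := by
  intro he
  rcases Sym2.eq_iff.1 he with ⟨rfl, hy⟩ | ⟨hx, rfl⟩
  · exact hxy.2.2 hy.symm
  · exact hxy.1.ne' (hxy.2.1.antisymm (hx ▸ par_anc y))

theorem backEdge_of_adj_of_anc_of_not_anc (hab : H.Adj a b) (he : s(a, b) ≠ s(w, T.par w))
    (hwa : T.Anc w a) (hwb : ¬T.Anc w b) : T.PAnc b w ∧ T.BackEdge a b := by
  have hba : T.Anc b a := (T.edge_anc a b hab).resolve_right fun h => hwb (hwa.trans h)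
  have hbw : T.Anc b w := (hba.anc_or_anc hwa).resolve_right hwb
  refine ⟨⟨hbw, ?_⟩, hab, hba, ?_⟩
  · rintro rfl
    exact hwb (.refl b)
  · rintro rfl
    by_cases hwa' : w = a
    · exact he (by rw [hwa'])
    · exact hwb (PAnc.anc_par ⟨hwa, hwa'⟩)

theorem mem_iff_mem_of_anc {A : Set V} (hA : IsComponentUnion H v s(u, T.par u) A) (hab : T.Anc a b)
    (hv : ¬(T.Anc a v ∧ T.Anc v b)) (hu : ¬(T.PAnc a u ∧ T.Anc u b)) : b ∈ A ↔ a ∈ A := by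
  obtain ⟨n, hn⟩ := hab
  induction n generalizing b with
  | zero => rw [show b = a from hn]
  | succ n ih =>
    rcases eq_or_ne a b with rfl | hne
    · rfl
    have hpar : T.Anc a (T.par b) := ⟨n, hn⟩
    have hab : T.PAnc a b := ⟨⟨n + 1, hn⟩, hne⟩
    have hbv : b ≠ v := by
      rintro rfl
      exact hv ⟨hab.1, .refl b⟩
    have hparv : T.par b ≠ v := by
      rintro rfl
      exact hv ⟨hpar, par_anc b⟩
    have hbu : b ≠ u := by
      rintro rfl
      exact hu ⟨hab, .refl b⟩
    have he : s(b, T.par b) ≠ s(u, T.par u) := by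
      intro he
      rcases Sym2.eq_iff.1 he with ⟨h, -⟩ | ⟨hb, hbu'⟩
      · exact hbu h
      · exact hbu ((hb ▸ par_anc u : T.Anc b u).antisymm (hbu' ▸ par_anc b))
    exact (hA.mem_iff_mem hbv hparv (T.par_adj b hab.ne_root) he).trans <|
      ih (fun h => hv ⟨h.1, h.2.trans (par_anc b)⟩)
        (fun h => hu ⟨h.1, h.2.trans (par_anc b)⟩) hn

theorem mem_iff_root_mem_of_backEdge {A : Set V}
    (hA : IsComponentUnion H v s(u, T.par u) A) (hvu : T.Anc v u) (hxv : x ≠ v)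
    (hyv : T.PAnc y v) (hxy : T.BackEdge x y) : x ∈ A ↔ r ∈ A :=
  calc
    x ∈ A ↔ y ∈ A := hA.mem_iff_mem hxv hyv.2 hxy.1 (hxy.ne_treeEdge u)
    _ ↔ r ∈ A := mem_iff_mem_of_anc hA (root_anc y) (fun h => hyv.not_anc h.2)
      fun h => hyv.not_anc (hvu.trans h.2)

/-- The vertex set of the subtree of `T` rooted at `u`, from which the parts cut off by a
vertex-edge cut-pair are built. -/
def subtree (T : DFSTree H r) (u : V) : Set V := {x | T.Anc u x}

theorem isComponentUnion_subtree (hhigh : T.IsHigh u v) (hlow : T.IsLow u v) :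
    IsComponentUnion H v s(u, T.par u) (T.subtree u) := by
  intro a b _ hbv hab he hua
  by_contra hub
  obtain ⟨hbu, hback⟩ := backEdge_of_adj_of_anc_of_not_anc hab he hua hub
  exact hbv ((hhigh.2.2 b hbu ⟨a, hua, hback⟩).antisymm (hlow.2.2 b hbu ⟨a, hua, hback⟩))

theorem isComponentUnion_subtree_diff_subtree (hc : c ≠ r) (hhigh : T.IsHigh u (T.par c))
    (hsub : T.MpSet c ⊆ T.subtree u) :
    IsComponentUnion H (T.par c) s(u, T.par u) (T.subtree c \ T.subtree u) := by
  rintro a b hac hbc hab he ⟨hca, hua⟩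
  constructor
  · by_contra hcb
    have hne : s(a, b) ≠ s(c, T.par c) := by
      intro he
      rcases Sym2.eq_iff.1 he with ⟨-, hb⟩ | ⟨ha, -⟩
      exacts [hbc hb, hac ha]
    obtain ⟨hb, hback⟩ := backEdge_of_adj_of_anc_of_not_anc hab hne hca hcb
    exact hua (hsub ⟨hca, b, ⟨hb.anc_par, hbc⟩, hback⟩)
  · intro hub
    obtain ⟨hau, hback⟩ :=
      backEdge_of_adj_of_anc_of_not_anc hab.symm (Sym2.eq_swap ▸ he) hub hua
    exact not_anc_par hc (hca.trans (hhigh.2.2 a hau ⟨b, hub, hback⟩))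

theorem vECutPair_of_isLow_par (hc : c ≠ r) (hcu : T.PAnc c u) (hhigh : T.IsHigh u (T.par c))
    (hlow : T.IsLow u (T.par c)) : VECutPair H (T.par c) s(u, T.par u) :=
  vECutPair_iff_exists_isComponentUnion.2 ⟨T.par_adj u hcu.ne_root, T.subtree u,
    isComponentUnion_subtree hhigh hlow, ⟨u, .refl u, hhigh.1.2.symm⟩,
    c, hcu.not_anc, (par_ne_self hc).symm⟩

theorem vECutPair_of_mpSet_subset_subtree (hc : c ≠ r) (hcu : T.PAnc c u)
    (hhigh : T.IsHigh u (T.par c)) (hsub : T.MpSet c ⊆ T.subtree u) :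
    VECutPair H (T.par c) s(u, T.par u) :=
  vECutPair_iff_exists_isComponentUnion.2 ⟨T.par_adj u hcu.ne_root, T.subtree c \ T.subtree u,
    isComponentUnion_subtree_diff_subtree hc hhigh hsub,
    ⟨c, ⟨.refl c, hcu.not_anc⟩, (par_ne_self hc).symm⟩,
    u, fun h => h.2 (.refl u), hhigh.1.2.symm⟩

theorem mem_iff_par_mem_of_mem_mpSet {A : Set V}
    (hA : IsComponentUnion H (T.par c) s(u, T.par u) A) (hcu : T.PAnc c u)
    (hx : x ∈ T.MpSet c) (hux : T.Anc u x) (hy : y ∈ T.MpSet c) (huy : ¬T.Anc u y) :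
    u ∈ A ↔ T.par u ∈ A := by
  obtain ⟨hcx, z, hz, hxz⟩ := hx
  obtain ⟨hcy, t, ht, hyt⟩ := hy
  have hc : c ≠ r := by
    rintro rfl
    exact hz.ne_root T.par_root
  have hparcu : T.Anc (T.par c) u := (par_anc c).trans hcu.1
  have ne_of_anc {w : V} (hcw : T.Anc c w) : w ≠ T.par c := by
    rintro rfl
    exact not_anc_par hc hcw
  have mem_iff_mem_c {w : V} (hcw : T.Anc c w) (huw : ¬T.Anc u w) : w ∈ A ↔ c ∈ A :=
    mem_iff_mem_of_anc hA hcw (fun h => not_anc_par hc h.1) fun h => huw h.2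
  calc
    u ∈ A ↔ x ∈ A := (mem_iff_mem_of_anc hA hux
      (fun h => not_anc_par hc (hcu.1.trans h.1)) fun h => h.1.2 rfl).symm
    _ ↔ r ∈ A := mem_iff_root_mem_of_backEdge hA hparcu (ne_of_anc hcx) hz hxz
    _ ↔ y ∈ A := (mem_iff_root_mem_of_backEdge hA hparcu (ne_of_anc hcy) ht hyt).symm
    _ ↔ c ∈ A := mem_iff_mem_c hcy huy
    _ ↔ T.par u ∈ A := (mem_iff_mem_c hcu.anc_par (not_anc_par hcu.ne_root)).symm

theorem mpSet_subset_subtree_of_vECutPair (hconn : (H.induce {w | w ≠ T.par c}).Preconnected)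
    (hcut : VECutPair H (T.par c) s(u, T.par u)) (hcu : T.Anc c u)
    (hx : x ∈ T.MpSet c) (hux : T.Anc u x) : T.MpSet c ⊆ T.subtree u := by
  intro y hy
  by_contra huy
  obtain ⟨-, hpar, A, hA, hsep⟩ := hcut.exists_isComponentUnion_separating hconn
  have hne : c ≠ u := by
    rintro rfl
    exact hpar rfl
  exact hsep (mem_iff_par_mem_of_mem_mpSet hA ⟨hcu, hne⟩ hx hux hy huy)

theorem IsMp.mpSet_subset_subtree_iff {m : V} (hm : T.IsMp c m) :
    T.MpSet c ⊆ T.subtree u ↔ T.Anc u m :=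
  ⟨hm.2 u, fun hum x hx => hum.trans (hm.1 x hx)⟩

section Numbering

variable {α : Type*} [Preorder α] {num : V → α}

theorem Anc.num_le_num (hmono : ∀ a b : V, T.PAnc a b → num a < num b) (hab : T.Anc a b) :
    num a ≤ num b := by
  rcases eq_or_ne a b with rfl | hne
  · exact le_rfl
  · exact (hmono a b ⟨hab, hne⟩).le

theorem anc_iff_num_le_num (hmono : ∀ a b : V, T.PAnc a b → num a < num b)
    (hconsec : ∀ v a b x : V, T.Anc v a → T.Anc v b →
      num a ≤ num x → num x ≤ num b → T.Anc v x)
    (hax : T.Anc a x) (hbx : T.Anc b x) : T.Anc a b ↔ num a ≤ num b :=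
  ⟨fun hab => hab.num_le_num hmono,
    fun hab => hconsec a a x b (.refl a) hax hab (hbx.num_le_num hmono)⟩

theorem IsMp.mpSet_subset_subtree_iff_num_le_num {m : V}
    (hmono : ∀ a b : V, T.PAnc a b → num a < num b)
    (hconsec : ∀ v a b x : V, T.Anc v a → T.Anc v b →
      num a ≤ num x → num x ≤ num b → T.Anc v x)
    (hm : T.IsMp c m) (hx : x ∈ T.MpSet c) (hux : T.Anc u x) :
    T.MpSet c ⊆ T.subtree u ↔ num u ≤ num m :=
  hm.mpSet_subset_subtree_iff.trans (anc_iff_num_le_num hmono hconsec hux (hm.1 x hx))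

end Numbering

end DFSTree

open DFSTree in
theorem stmt_13_general {V α : Type*} [Preorder α] {H : SimpleGraph V} {r : V}
    (T : DFSTree H r) (num : V → α) (hmono : ∀ a b : V, T.PAnc a b → num a < num b)
    (hconsec : ∀ v a b x : V, T.Anc v a → T.Anc v b →
      num a ≤ num x → num x ≤ num b → T.Anc v x)
    {u c lo mpc : V} (hhigh : T.IsHigh u (T.par c)) (hlow : T.IsLow u lo) (hmp : T.IsMp c mpc) :
    ((H.induce {w | w ≠ T.par c}).Preconnected → T.Anc c u →
      VECutPair H (T.par c) s(u, T.par u) →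
      lo = T.par c ∨ (T.PAnc lo (T.par c) ∧ num u ≤ num mpc)) ∧
    (c ≠ r → T.PAnc c u → (lo = T.par c ∨ (T.PAnc lo (T.par c) ∧ num u ≤ num mpc)) →
      VECutPair H (T.par c) s(u, T.par u)) := by
  obtain ⟨x, hux, hxlo⟩ := hlow.2.1
  have mem_mpSet (hcu : T.Anc c u) (hlo : T.PAnc lo (T.par c)) : x ∈ T.MpSet c :=
    ⟨hcu.trans hux, lo, hlo, hxlo⟩
  have subset_iff (hx : x ∈ T.MpSet c) : T.MpSet c ⊆ T.subtree u ↔ num u ≤ num mpc :=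
    hmp.mpSet_subset_subtree_iff_num_le_num hmono hconsec hx hux
  constructor
  · intro hconn hcu hcut
    refine or_iff_not_imp_left.2 fun hne => ?_
    have hlo : T.PAnc lo (T.par c) := ⟨hhigh.2.2 lo hlow.1 hlow.2.1, hne⟩
    have hx := mem_mpSet hcu hlo
    exact ⟨hlo, (subset_iff hx).1 (mpSet_subset_subtree_of_vECutPair hconn hcut hcu hx hux)⟩
  · rintro hc hcu (rfl | ⟨hlo, hle⟩)
    · exact vECutPair_of_isLow_par hc hcu hhigh hlow
    · have hsub := (subset_iff (mem_mpSet hcu.1 hlo)).2 hle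
      exact vECutPair_of_mpSet_subset_subtree hc hcu hhigh hsub

theorem stmt_13 {V : Type*} [Fintype V] (H : SimpleGraph V) (r : V)
    (T : DFSTree H r) (hH : TwoVertexConnected H)
    (num : V → ℕ) (hinj : Function.Injective num)
    (hmono : ∀ a b : V, T.PAnc a b → num a < num b)
    (hconsec : ∀ v a b x : V, T.Anc v a → T.Anc v b →
      num a ≤ num x → num x ≤ num b → T.Anc v x) :
    (∀ v u c lo mpc : V, u ≠ r → T.PAnc v u →
      VECutPair H v s(u, T.par u) → T.IsHigh u v →
      T.par c = v → c ≠ r → T.Anc c u →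
      T.IsLow u lo → T.IsMp c mpc →
      (lo = v ∨ (T.PAnc lo v ∧ num u ≤ num mpc))) ∧
    (∀ u c lo mpc : V, u ≠ r → c ≠ r → T.PAnc c u → T.IsHigh u (T.par c) →
      T.IsLow u lo → T.IsMp c mpc →
      (lo = T.par c ∨ (T.PAnc lo (T.par c) ∧ num u ≤ num mpc)) →
      VECutPair H (T.par c) s(u, T.par u)) := by
  constructor
  · rintro _ u c lo mpc - - hcut hhigh rfl - hcu hlow hmp
    exact (stmt_13_general T num hmono hconsec hhigh hlow hmp).1 (hH.2.2 _).preconnected hcu hcut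
  · rintro u c lo mpc - hc hcu hhigh hlow hmp
    exact (stmt_13_general T num hmono hconsec hhigh hlow hmp).2 hc hcu
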